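/- arXiv:0811.1771 — 3 statements merged into one kernel-verified Lean document; each statement's English description precedes it below -/
import Mathlib

section
/- There exist a connected, complete metric space X and a continuous function f : X → ℝ which is locally extremal but not constant (Theorem 2 of the paper). -/
/-!
A path cannot carry a nonconstant continuous locally extremal function, so the space must be
connected without being connected through paths between different levels of `f`.

The level set of height `x : ℝ` is a star with centre `c_x`. Its legs are indexed by those gates
`k = (w, σ)`, with `w : ℝ` and `σ` a sign, for which `x` lies on the `σ`-side of `w` (weakly). Inside
`ℓ¹(ℝ) × ℓ¹(ℝ × Bool)`, the leg of `x` towards the gate `k = (w, σ)` is the segment of points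
`((1 - b) δ_x, b δ_k)`, starting at `c_x = (δ_x, 0)` and stopped as soon as `1 - b = |x - w| b`.
So the leg reaches the tip `(0, δ_k)` exactly when `x = w`, and otherwise it stops at a distance
at most `|x - w|` from it.

* The union `X` of all legs is closed, hence complete (`isClosed_web`), because it is cut out by
  closed conditions on coordinates and norms.
* The height function is locally constant away from the tips. Near the tip of `(w, σ)` only legs
  towards `(w, σ)` occur, so the heights there are all `≥ w` or all `≤ w` according to `σ`,
  and they tend to `w`.
* `X` is connected (`preconnectedSpace_web`): a continuous `g : X → Bool` is constant on each leg,
  so it gives a function `x ↦ g c_x` on `ℝ`. Continuity of `g` at the two tips of height `w` makes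
  that function constant near `w` on either side. It is thus locally constant on `ℝ`, hence constant.
-/

namespace LocExt

open Filter Topology

/-- The `ℓ¹` space over a discrete index set. -/
abbrev L1 (ι : Type) : Type := lp (fun _ : ι => ℝ) 1

/-- A gate `(w, σ)`: a real number together with a side, `true` for right and `false` for left. -/
abbrev Gate : Type := ℝ × Bool

/-- `x` lies weakly on the side of `w` prescribed by the gate `(w, σ)`. -/
def Side (k : Gate) (x : ℝ) : Prop := if k.2 then k.1 ≤ x else x ≤ k.1

open Classical in
/-- The point `((1 - b) δ_x, b δ_k)`. -/
noncomputable def pt (x : ℝ) (k : Gate) (b : ℝ) : L1 ℝ × L1 Gate :=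
  (lp.single 1 x (1 - b), lp.single 1 k b)

/-- The parameters `(x, k, b)` of the points on the leg of `x` towards `k`. The second condition
implies `b ≤ 1`. -/
def Adm (x : ℝ) (k : Gate) (b : ℝ) : Prop := 0 ≤ b ∧ |x - k.1| * b ≤ 1 - b ∧ Side k x

/-- The union of all legs. -/
def web : Set (L1 ℝ × L1 Gate) := {v | ∃ x k b, Adm x k b ∧ v = pt x k b}

lemma Adm.le_one {x : ℝ} {k : Gate} {b : ℝ} (h : Adm x k b) : b ≤ 1 := by
  have := mul_nonneg (abs_nonneg (x - k.1)) h.1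
  linarith [h.2.1]

lemma Adm.eq_of_one {x : ℝ} {k : Gate} {b : ℝ} (h : Adm x k b) (hb : b = 1) : x = k.1 := by
  have h2 := h.2.1
  subst hb
  have : |x - k.1| = 0 := le_antisymm (by linarith) (abs_nonneg _)
  linarith [abs_eq_zero.1 this]

lemma Adm.mono {x : ℝ} {k : Gate} {b s : ℝ} (h : Adm x k b) (h0 : 0 ≤ s) (hs : s ≤ b) :
    Adm x k s := by
  refine ⟨h0, ?_, h.2.2⟩
  have := mul_le_mul_of_nonneg_left hs (abs_nonneg (x - k.1))
  linarith [h.2.1]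

lemma side_self (x : ℝ) (σ : Bool) : Side (x, σ) x := by
  cases σ <;> simp [Side]

lemma adm_zero {x : ℝ} {k : Gate} (h : Side k x) : Adm x k 0 := ⟨le_rfl, by simp, h⟩

lemma adm_one (x : ℝ) (σ : Bool) : Adm x (x, σ) 1 := ⟨zero_le_one, by simp, side_self x σ⟩

lemma pt_fst_self (x : ℝ) (k : Gate) (b : ℝ) : (pt x k b).1 x = 1 - b := by simp [pt]

lemma pt_snd_self (x : ℝ) (k : Gate) (b : ℝ) : (pt x k b).2 k = b := by simp [pt]

lemma pt_fst_ne {x y : ℝ} (k : Gate) (b : ℝ) (h : (pt x k b).1 y ≠ 0) : y = x := by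
  by_contra hne
  exact h (by simp [pt, Pi.single_eq_of_ne hne])

lemma pt_snd_ne {x : ℝ} {k l : Gate} {b : ℝ} (h : (pt x k b).2 l ≠ 0) : l = k := by
  by_contra hne
  exact h (by simp [pt, Pi.single_eq_of_ne hne])

lemma continuous_pt (x : ℝ) (k : Gate) : Continuous (pt x k) := by
  classical
  have h1 := (lp.isometry_single (E := fun _ : ℝ => ℝ) (p := 1) x).continuous
  have h2 := (lp.isometry_single (E := fun _ : Gate => ℝ) (p := 1) k).continuous
  have h3 : Continuous fun b : ℝ => 1 - b := by fun_prop
  have := (h1.comp h3).prodMk h2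
  convert this using 1
  funext b
  simp only [pt, Function.comp]

lemma norm_pt_snd (x : ℝ) (k : Gate) (b : ℝ) : ‖(pt x k b).2‖ = |b| := by
  simp [pt, lp.norm_single]

lemma norm_pt_fst (x : ℝ) (k : Gate) (b : ℝ) : ‖(pt x k b).1‖ = |1 - b| := by
  simp only [pt]
  rw [lp.norm_single one_pos, Real.norm_eq_abs]

/-- The height of a point of the web is well defined: at the tip of a gate, where the first
component vanishes, it is determined by the gate. -/
lemma height_unique {x x' : ℝ} {k k' : Gate} {b b' : ℝ} (h : Adm x k b) (h' : Adm x' k' b')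
    (e : pt x k b = pt x' k' b') : x = x' := by
  have hb : b = b' := by
    have := norm_pt_snd x k b
    rwa [e, norm_pt_snd, abs_of_nonneg h.1, abs_of_nonneg h'.1, eq_comm] at this
  subst hb
  by_cases hb1 : b = 1
  · have : k = k' := by
      apply pt_snd_ne (x := x') (b := b)
      rw [← e, pt_snd_self, hb1]
      exact one_ne_zero
    rw [h.eq_of_one hb1, h'.eq_of_one hb1, this]
  · apply pt_fst_ne k' b
    rw [← e, pt_fst_self]
    exact sub_ne_zero.2 (Ne.symm hb1)

/-- A nonnegative element with pairwise disjoint coordinates is a multiple of a unit vector. -/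
lemma eq_single {ι : Type} [DecidableEq ι] [Nonempty ι] (u : L1 ι) (h0 : ∀ i, 0 ≤ u i)
    (h : ∀ i j, i ≠ j → u i * u j = 0) : ∃ i, u = lp.single 1 i ‖u‖ := by
  obtain ⟨i, hi⟩ : ∃ i, ∀ j, j ≠ i → u j = 0 := by
    by_cases hu : ∃ i, u i ≠ 0
    · obtain ⟨i, hi⟩ := hu
      exact ⟨i, fun j hj => (mul_eq_zero.1 (h j i hj)).resolve_right hi⟩
    · push Not at hu
      exact ⟨Classical.arbitrary ι, fun j _ => hu j⟩
  have key : u = lp.single 1 i (u i) := by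
    apply lp.ext
    funext j
    by_cases hj : j = i
    · subst hj; simp
    · simp [Pi.single_eq_of_ne hj, hi j hj]
  have hn : ‖u‖ = u i := by
    rw [key, lp.norm_single one_pos, Real.norm_eq_abs, lp.single_apply_self, abs_of_nonneg (h0 i)]
  exact ⟨i, hn ▸ key⟩

lemma continuous_coord {ι : Type} (i : ι) : Continuous fun u : L1 ι => u i :=
  (lp.evalCLM ℝ (fun _ : ι => ℝ) 1 i).continuous

/-- The closed conditions cutting out the web. -/
def Conds (v : L1 ℝ × L1 Gate) : Prop :=
  (∀ x, 0 ≤ v.1 x) ∧ (∀ k, 0 ≤ v.2 k) ∧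
  (∀ x y, x ≠ y → v.1 x * v.1 y = 0) ∧ (∀ k l, k ≠ l → v.2 k * v.2 l = 0) ∧
  ‖v.1‖ + ‖v.2‖ = 1 ∧ (∀ x k, ¬ Side k x → v.1 x * v.2 k = 0) ∧
  (∀ x (k : Gate), 0 ≤ v.1 x * v.2 k * (v.1 x - |x - k.1| * v.2 k))

lemma isClosed_conds : IsClosed {v | Conds v} := by
  have c1 (x : ℝ) : Continuous fun v : L1 ℝ × L1 Gate => v.1 x :=
    (continuous_coord x).comp continuous_fst
  have c2 (k : Gate) : Continuous fun v : L1 ℝ × L1 Gate => v.2 k :=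
    (continuous_coord k).comp continuous_snd
  simp only [Conds, Set.ofPred_and, Set.ofPred_forall]
  refine IsClosed.inter ?_ <| IsClosed.inter ?_ <| IsClosed.inter ?_ <| IsClosed.inter ?_ <|
    IsClosed.inter ?_ <| IsClosed.inter ?_ ?_
  · exact isClosed_iInter fun x => isClosed_le continuous_const (c1 x)
  · exact isClosed_iInter fun x => isClosed_le continuous_const (c2 x)
  · exact isClosed_iInter fun x => isClosed_iInter fun y => isClosed_iInter fun _ =>
      isClosed_eq ((c1 x).mul (c1 y)) continuous_const
  · exact isClosed_iInter fun x => isClosed_iInter fun y => isClosed_iInter fun _ =>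
      isClosed_eq ((c2 x).mul (c2 y)) continuous_const
  · exact isClosed_eq (by fun_prop) continuous_const
  · exact isClosed_iInter fun x => isClosed_iInter fun y => isClosed_iInter fun _ =>
      isClosed_eq ((c1 x).mul (c2 y)) continuous_const
  · exact isClosed_iInter fun x => isClosed_iInter fun k => isClosed_le continuous_const
      (((c1 x).mul (c2 k)).mul ((c1 x).sub (continuous_const.mul (c2 k))))

lemma conds_pt {x : ℝ} {k : Gate} {b : ℝ} (h : Adm x k b) : Conds (pt x k b) := by
  have hb := h.le_one
  have f0 : ∀ y, y ≠ x → (pt x k b).1 y = 0 := fun y hy => by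
    by_contra hne; exact hy (pt_fst_ne k b hne)
  have s0 : ∀ l, l ≠ k → (pt x k b).2 l = 0 := fun y hy => by
    by_contra hne; exact hy (pt_snd_ne hne)
  refine ⟨fun y => ?_, fun l => ?_, fun y z hyz => ?_, fun l m hlm => ?_, ?_, fun y l hs => ?_,
    fun y l => ?_⟩
  · by_cases hy : y = x
    · rw [hy, pt_fst_self]; linarith
    · rw [f0 y hy]
  · by_cases hl : l = k
    · rw [hl, pt_snd_self]; exact h.1
    · rw [s0 l hl]
  · by_cases hy : y = x
    · rw [f0 z (fun hz => hyz (hy.trans hz.symm)), mul_zero]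
    · rw [f0 y hy, zero_mul]
  · by_cases hl : l = k
    · rw [s0 m (fun hm => hlm (hl.trans hm.symm)), mul_zero]
    · rw [s0 l hl, zero_mul]
  · rw [norm_pt_fst, norm_pt_snd, abs_of_nonneg h.1, abs_of_nonneg (by linarith)]; ring
  · by_cases hy : y = x
    · by_cases hl : l = k
      · subst hy hl; exact absurd h.2.2 hs
      · rw [s0 l hl, mul_zero]
    · rw [f0 y hy, zero_mul]
  · by_cases hy : y = x
    · by_cases hl : l = k
      · rw [hy, hl, pt_fst_self, pt_snd_self]
        exact mul_nonneg (mul_nonneg (by linarith) h.1) (by linarith [h.2.1])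
      · rw [s0 l hl]; simp
    · rw [f0 y hy]; simp

lemma mem_web_of_conds {v : L1 ℝ × L1 Gate} (h : Conds v) : v ∈ web := by
  classical
  obtain ⟨h1, h2, h3, h4, h5, h6, h7⟩ := h
  obtain ⟨x, hx⟩ := eq_single v.1 h1 h3
  obtain ⟨k, hk⟩ := eq_single v.2 h2 h4
  set b := ‖v.2‖ with hb
  have ha : ‖v.1‖ = 1 - b := by linarith
  rw [ha] at hx
  have hb0 : 0 ≤ b := norm_nonneg _
  have hb1 : 0 ≤ 1 - b := ha ▸ norm_nonneg _
  have hvx : v.1 x = 1 - b := by rw [hx]; simp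
  have hvk : v.2 k = b := by rw [hk]; simp
  -- the endpoints `b = 1` and `b = 0` leave `x`, respectively `k`, undetermined
  rcases hb1.eq_or_lt with e | hlt
  · have e1 : b = 1 := by linarith
    refine ⟨k.1, k, 1, adm_one k.1 k.2, Prod.ext ?_ ?_⟩
    · rw [hx, e1]; simp [pt]
    · rw [hk, e1]; simp only [pt]
  rcases hb0.eq_or_lt with e | hlt'
  · refine ⟨x, (x, true), 0, adm_zero (side_self x true), Prod.ext ?_ ?_⟩
    · rw [hx, ← e]; simp only [pt]
    · rw [hk, ← e]; simp [pt]
  · refine ⟨x, k, b, ⟨hb0, ?_, ?_⟩, Prod.ext ?_ ?_⟩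
    · have := h7 x k
      rw [hvx, hvk] at this
      have := nonneg_of_mul_nonneg_right this (mul_pos hlt hlt')
      linarith
    · by_contra hs
      have := h6 x k hs
      rw [hvx, hvk] at this
      exact (mul_pos hlt hlt').ne' this
    · rw [hx]; simp only [pt]
    · rw [hk]; simp only [pt]

lemma isClosed_web : IsClosed web := by
  convert isClosed_conds using 1
  ext v
  refine ⟨?_, mem_web_of_conds⟩
  rintro ⟨x, k, b, h, rfl⟩
  exact conds_pt h

/-- A point of the web, given by admissible parameters. -/
noncomputable def mk {x : ℝ} {k : Gate} {b : ℝ} (h : Adm x k b) : web := ⟨pt x k b, x, k, b, h, rfl⟩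

lemma exists_mk (v : web) : ∃ x k b, ∃ h : Adm x k b, v = mk h := by
  obtain ⟨_, x, k, b, h, rfl⟩ := v
  exact ⟨x, k, b, h, rfl⟩

/-- The centre `c_x` of the star of height `x`. -/
noncomputable def centre (x : ℝ) : web := mk (adm_zero (side_self x true))

lemma mk_zero {x : ℝ} {k : Gate} (h : Adm x k 0) : mk h = centre x := by
  apply Subtype.ext
  simp [mk, centre, pt]

/-- A continuous `Bool`-valued function is constant along each leg. -/
lemma eq_centre {g : web → Bool} (hg : Continuous g) {x : ℝ} {k : Gate} {b : ℝ} (h : Adm x k b) :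
    g (mk h) = g (centre x) := by
  let γ : Set.Icc (0 : ℝ) b → web := fun s => mk (h.mono s.2.1 s.2.2)
  have hγ : Continuous γ :=
    Continuous.subtype_mk ((continuous_pt x k).comp continuous_subtype_val) _
  have : PreconnectedSpace (Set.Icc (0 : ℝ) b) :=
    Subtype.preconnectedSpace isPreconnected_Icc
  have := PreconnectedSpace.constant inferInstance (hg.comp hγ) (x := ⟨b, h.1, le_rfl⟩)
    (y := ⟨0, le_rfl, h.1⟩)
  simp only [Function.comp, γ] at this
  rw [this, mk_zero]

/-- The end of the leg of `x` towards `k`. -/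
lemma adm_end {x : ℝ} {k : Gate} (h : Side k x) : Adm x k (1 / (1 + |x - k.1|)) := by
  have h0 : 0 < 1 + |x - k.1| := by positivity
  refine ⟨by positivity, le_of_eq ?_, h⟩
  field_simp
  ring

/-- Continuity of `g` at the tip of the gate `k` transports the value of `g` from height `k.1` to
all nearby heights on the corresponding side. -/
lemma eventually_side {g : web → Bool} (hg : Continuous g) (k : Gate) :
    ∀ᶠ x in 𝓝 k.1, Side k x → g (centre x) = g (centre k.1) := by
  have htip := adm_one k.1 k.2
  have hev : ∀ᶠ v in 𝓝 (mk htip), g v = g (mk htip) :=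
    hg.continuousAt.eventually (IsOpen.mem_nhds (isOpen_discrete {g (mk htip)}) rfl)
  obtain ⟨ε, hε, hball⟩ := Metric.eventually_nhds_iff.1 hev
  -- at the ends of the legs towards `k`, both components are governed by the parameter `b → 1`
  have hb : Tendsto (fun x : ℝ => 1 / (1 + |x - k.1|)) (𝓝 k.1) (𝓝 1) := by
    have : ContinuousAt (fun x : ℝ => 1 / (1 + |x - k.1|)) k.1 := by
      refine ContinuousAt.div (by fun_prop) (by fun_prop) ?_
      simp
    simpa [ContinuousAt] using this
  filter_upwards [hb.eventually (Metric.ball_mem_nhds 1 hε)] with x hx hs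
  have hd : dist (mk (adm_end hs)) (mk htip) < ε := by
    set b := 1 / (1 + |x - k.1|)
    replace hx : |b - 1| < ε := hx
    change dist (pt x k b) (pt k.1 (k.1, k.2) 1) < ε
    rw [Prod.dist_eq, max_lt_iff]
    constructor
    · have : (pt k.1 (k.1, k.2) 1).1 = 0 := by simp [pt]
      rw [this, dist_zero_right, norm_pt_fst, abs_sub_comm]
      exact hx
    · simp only [pt]
      rw [(lp.isometry_single (E := fun _ : Gate => ℝ) (p := 1) k).dist_eq, Real.dist_eq]
      exact hx
  rw [← eq_centre hg (adm_end hs), hball hd, eq_centre hg htip]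

lemma preconnectedSpace_web : PreconnectedSpace web := by
  refine preconnectedSpace_of_forall_constant fun g hg => ?_
  have hloc : IsLocallyConstant fun x : ℝ => g (centre x) := by
    rw [IsLocallyConstant.iff_eventually_eq]
    intro w
    filter_upwards [eventually_side hg (w, true), eventually_side hg (w, false)] with x h1 h2
    rcases le_total w x with h | h
    · exact h1 (by simpa [Side] using h)
    · exact h2 (by simpa [Side] using h)
  intro u v
  obtain ⟨x, k, b, h, rfl⟩ := exists_mk u
  obtain ⟨x', k', b', h', rfl⟩ := exists_mk v
  rw [eq_centre hg, eq_centre hg]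
  exact hloc.apply_eq_of_preconnectedSpace _ _

/-- The height of a point of the web. -/
noncomputable def height (v : web) : ℝ := v.2.choose

lemma height_mk {x : ℝ} {k : Gate} {b : ℝ} (h : Adm x k b) : height (mk h) = x := by
  obtain ⟨k', b', h', e⟩ := (mk h).2.choose_spec
  exact (height_unique h h' e).symm

lemma height_eventually_const {x : ℝ} {k : Gate} {b : ℝ} (h : Adm x k b) (hb : b ≠ 1) :
    ∀ᶠ v in 𝓝 (mk h), height v = x := by
  have c : Continuous fun v : web => v.1.1 x :=
    (continuous_coord x).comp (continuous_fst.comp continuous_subtype_val)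
  have h0 : (mk h).1.1 x ≠ 0 := by
    change (pt x k b).1 x ≠ 0
    rw [pt_fst_self]
    exact sub_ne_zero.2 (Ne.symm hb)
  filter_upwards [c.continuousAt.eventually_ne h0] with v hv
  obtain ⟨x', k', b', h', rfl⟩ := exists_mk v
  rw [height_mk, pt_fst_ne _ _ hv]

/-- Near the tip of the gate `k`, all heights are on the side prescribed by `k`, and their distance
to `k.1` is controlled by the coordinate at `k`. -/
lemma height_near_tip {x : ℝ} {k : Gate} (h : Adm x k 1) :
    ∀ᶠ v in 𝓝 (mk h), Side k (height v) ∧ |height v - x| ≤ 2 * (1 - v.1.2 k) := by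
  have c : Continuous fun v : web => v.1.2 k :=
    (continuous_coord k).comp (continuous_snd.comp continuous_subtype_val)
  have h0 : 1 / 2 < (mk h).1.2 k := by
    change 1 / 2 < (pt x k 1).2 k
    rw [pt_snd_self]
    norm_num
  filter_upwards [c.continuousAt.eventually (lt_mem_nhds h0)] with v hv
  obtain ⟨x', k', b', h', rfl⟩ := exists_mk v
  change 1 / 2 < (pt x' k' b').2 k at hv
  have hk : k = k' := pt_snd_ne (by linarith : 0 < (pt x' k' b').2 k).ne'
  subst hk
  rw [height_mk, h.eq_of_one rfl]
  refine ⟨h'.2.2, ?_⟩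
  change _ ≤ 2 * (1 - (pt x' k b').2 k)
  rw [pt_snd_self] at hv ⊢
  nlinarith [h'.2.1, abs_nonneg (x' - k.1)]

lemma continuous_height : Continuous height := by
  rw [continuous_iff_continuousAt]
  intro v
  obtain ⟨x, k, b, h, rfl⟩ := exists_mk v
  rw [ContinuousAt, height_mk]
  by_cases hb : b = 1
  · subst hb
    have c : Continuous fun v : web => 2 * (1 - v.1.2 k) :=
      continuous_const.mul (continuous_const.sub
        ((continuous_coord k).comp (continuous_snd.comp continuous_subtype_val)))
    have ht : Tendsto (fun v : web => 2 * (1 - v.1.2 k)) (𝓝 (mk h)) (𝓝 0) := by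
      have := c.tendsto (mk h)
      have e : (mk h).1.2 k = 1 := pt_snd_self x k 1
      simpa [e] using this
    rw [tendsto_iff_dist_tendsto_zero]
    refine squeeze_zero' (Eventually.of_forall fun _ => dist_nonneg) ?_ ht
    filter_upwards [height_near_tip h] with v hv
    exact hv.2
  · exact tendsto_const_nhds.congr' ((height_eventually_const h hb).mono fun v hv => hv.symm)

lemma height_extremal (v : web) : IsLocalMin height v ∨ IsLocalMax height v := by
  obtain ⟨x, k, b, h, rfl⟩ := exists_mk v
  by_cases hb : b = 1
  · subst hb
    have hx := h.eq_of_one rfl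
    obtain ⟨w, σ⟩ := k
    cases σ
    · right
      filter_upwards [height_near_tip h] with v hv
      rw [height_mk, hx]
      simpa [Side] using hv.1
    · left
      filter_upwards [height_near_tip h] with v hv
      rw [height_mk, hx]
      simpa [Side] using hv.1
  · left
    filter_upwards [height_eventually_const h hb] with v hv
    rw [height_mk, hv]

end LocExt

/-- Theorem 2: there exist a connected complete metric space `X` and a continuous
function `f : X → ℝ` which is locally extremal but not constant. -/
theorem stmt_11 : ∃ (X : Type) (_ : MetricSpace X) (f : X → ℝ),
    CompleteSpace X ∧ ConnectedSpace X ∧ Continuous f ∧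
    (∀ x : X, IsLocalMin f x ∨ IsLocalMax f x) ∧
    ¬ ∀ x y : X, f x = f y := by
  refine ⟨LocExt.web, inferInstance, LocExt.height, LocExt.isClosed_web.completeSpace_coe,
    ?_, LocExt.continuous_height, LocExt.height_extremal, fun h => ?_⟩
  · have := LocExt.preconnectedSpace_web
    exact { toNonempty := ⟨LocExt.centre 0⟩ }
  · have := h (LocExt.centre 0) (LocExt.centre 1)
    rw [LocExt.centre, LocExt.centre, LocExt.height_mk, LocExt.height_mk] at this
    exact zero_ne_one this
end

section
/- There exist a connected, complete metric space X and a continuous locally extremal function f : X → ℝ whose image is exactly the unit interval [0,1]. -/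
/-!
The space is a union of hedgehogs, one over each value `u ∈ [0,1]`, on which `f` is constantly `u`.
A spike over `u` is labelled by a pair `p = (t, ε)`, where `t ∈ [0,1]` and the sign `ε` says on
which closed side of `t` the value `u` lies; a point of the spike has a height `h ∈ [0,1]`, and all
spikes over `u` meet at the centre `h = 1`. For fixed `p = (t, ε)`, the feet (`h = 0`) of the
spikes labelled `p` over `u` converge to the foot of the spike labelled `p` over `t` as `u → t`.
Concretely, the point `(p, u, h)` is placed at

  `(h, u, (1 - h) δ_p, max h |u - t| δ_u)`

in `ℝ × ℝ × ℓ²(ℝ × Bool) × ℓ²(ℝ)`, where `δ` denotes the canonical unit vectors, and `f` is the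
coordinate `u`.

* If `max h |u - t| > 0`, the last coordinate forces `u` to be constant nearby, so `f` is locally
  constant. Otherwise `h = 0` and `u = t`, and the third coordinate forces `p` to be constant
  nearby, so `f` takes only values on one side of `t` (`web_extremal`).
* Multiples `c_n δ_{a_n}` which converge while `c_n` tends to a nonzero limit have eventually
  constant `a_n`. This makes the set closed, hence complete (`web_isClosed`).
* A continuous `g` to `Bool` is constant on every spike, hence on every hedgehog, and so it induces
  a function on `[0,1]`. The latter is locally constant because of the converging feet on both
  sides of each `t`, hence constant because `[0,1]` is connected (`web_connected`).
-/

open Filter Topology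

namespace LocExtremal

/-- The canonical unit vector of `ℓ²(A)` at `a`. -/
noncomputable def unitVec {A : Type} [DecidableEq A] (a : A) : lp (fun _ : A => ℝ) 2 :=
  lp.single 2 a (1 : ℝ)

lemma norm_unitVec {A : Type} [DecidableEq A] (a : A) : ‖unitVec a‖ = 1 := by
  simp [unitVec, lp.norm_single]

lemma abs_le_norm_sub {A : Type} [DecidableEq A] {a b : A} (h : a ≠ b) (c d : ℝ) :
    |c| ≤ ‖c • unitVec a - d • unitVec b‖ := by
  have h1 := lp.norm_apply_le_norm (p := 2) (by norm_num) (c • unitVec a - d • unitVec b) a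
  have h2 : (c • unitVec a - d • unitVec b : lp (fun _ : A => ℝ) 2) a = c := by
    change c * (unitVec a : A → ℝ) a - d * (unitVec b : A → ℝ) a = c
    simp [unitVec, lp.single_apply, h]
  rwa [h2] at h1

lemma eventually_const {A : Type} [DecidableEq A] {c : ℕ → ℝ} {a : ℕ → A} {c₀ : ℝ}
    {g : lp (fun _ : A => ℝ) 2} (hc : Tendsto c atTop (𝓝 c₀)) (h0 : 0 < c₀)
    (hg : Tendsto (fun n => c n • unitVec (a n)) atTop (𝓝 g)) :
    ∃ N, ∀ n ≥ N, a n = a N := by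
  obtain ⟨N₁, h1⟩ := Metric.cauchySeq_iff'.1 hg.cauchySeq (c₀ / 2) (by linarith)
  obtain ⟨N₂, h2⟩ := eventually_atTop.1 (hc.eventually (lt_mem_nhds (half_lt_self h0)))
  have key : ∀ n ≥ max N₁ N₂, a n = a N₁ := by
    intro n hn
    by_contra hne
    have h3 := h1 n (le_trans (le_max_left _ _) hn)
    have h4 := h2 n (le_trans (le_max_right _ _) hn)
    rw [dist_eq_norm] at h3
    have h5 := abs_le_norm_sub hne (c n) (c N₁)
    linarith [le_abs_self (c n)]
  exact ⟨max N₁ N₂, fun n hn => (key n hn).trans (key _ le_rfl).symm⟩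

/-- The complete metric space containing the construction. -/
abbrev Ambient : Type :=
  ℝ × ℝ × lp (fun _ : ℝ × Bool => ℝ) 2 × lp (fun _ : ℝ => ℝ) 2

/-- The point at height `h` on the spike labelled `p` of the hedgehog over `u`. -/
noncomputable def pt (p : ℝ × Bool) (u h : ℝ) : Ambient :=
  (h, u, (1 - h) • unitVec p, max h |u - p.1| • unitVec u)

/-- The value `u` lies on the closed side of `p.1` given by the sign `p.2`
(`true` is the right side). -/
def Side (p : ℝ × Bool) (u : ℝ) : Prop := if p.2 then p.1 ≤ u else u ≤ p.1

/-- The spikes which occur: those labelled `(t, ε)` over `u` with `t, u ∈ [0,1]` and `u` on the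
side `ε` of `t`. -/
def Valid (p : ℝ × Bool) (u : ℝ) : Prop :=
  p.1 ∈ Set.Icc (0 : ℝ) 1 ∧ u ∈ Set.Icc (0 : ℝ) 1 ∧ Side p u

/-- The union of all hedgehogs. -/
def web : Set Ambient :=
  {x | ∃ p u h, Valid p u ∧ h ∈ Set.Icc (0 : ℝ) 1 ∧ x = pt p u h}

lemma isClosed_valid (p : ℝ × Bool) : IsClosed {u | Valid p u} := by
  have h1 : IsClosed {u | Side p u} := by
    unfold Side
    by_cases h : p.2
    · simpa [h] using isClosed_le continuous_const continuous_id
    · simpa [h] using isClosed_le continuous_id continuous_const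
  exact isClosed_const.inter (isClosed_Icc.inter h1)

lemma Valid.abs_sub_le {p : ℝ × Bool} {u : ℝ} (h : Valid p u) : |u - p.1| ≤ 1 := by
  obtain ⟨⟨h1, h2⟩, ⟨h3, h4⟩, -⟩ := h
  rw [abs_le]; constructor <;> linarith

lemma valid_self {t : ℝ} (ht : t ∈ Set.Icc (0 : ℝ) 1) (e : Bool) : Valid (t, e) t :=
  ⟨ht, ht, by simp [Side]⟩

lemma web_isClosed : IsClosed web := by
  apply IsSeqClosed.isClosed
  rintro x ⟨h, u, g, k⟩ hx hlim
  choose P U H hV hH hxe using hx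
  obtain rfl : x = fun n => pt (P n) (U n) (H n) := funext hxe
  have lh : Tendsto H atTop (𝓝 h) := (continuous_fst.tendsto _).comp hlim
  have lu : Tendsto U atTop (𝓝 u) :=
    ((continuous_fst.comp continuous_snd).tendsto _).comp hlim
  have lg : Tendsto (fun n => (1 - H n) • unitVec (P n)) atTop (𝓝 g) :=
    ((continuous_fst.comp (continuous_snd.comp continuous_snd)).tendsto _).comp hlim
  have lk : Tendsto (fun n => max (H n) |U n - (P n).1| • unitVec (U n)) atTop (𝓝 k) :=
    ((continuous_snd.comp (continuous_snd.comp continuous_snd)).tendsto _).comp hlim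
  have hmem : h ∈ Set.Icc (0 : ℝ) 1 := isClosed_Icc.mem_of_tendsto lh (.of_forall hH)
  have l1 : Tendsto (fun n => 1 - H n) atTop (𝓝 (1 - h)) := lh.const_sub 1
  rcases hmem.2.lt_or_eq with hlt | rfl
  · obtain ⟨N, hN⟩ := eventually_const l1 (by linarith) lg
    have eP : ∀ᶠ n in atTop, P n = P N := eventually_atTop.2 ⟨N, hN⟩
    generalize P N = p at eP
    have lm : Tendsto (fun n => max (H n) |U n - (P n).1|) atTop (𝓝 (max h |u - p.1|)) := by
      refine (lh.max (lu.sub_const p.1).abs).congr' ?_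
      filter_upwards [eP] with n hn
      rw [hn]
    have hg : g = (1 - h) • unitVec p := by
      refine tendsto_nhds_unique lg ((l1.smul_const (unitVec p)).congr' ?_)
      filter_upwards [eP] with n hn
      rw [hn]
    have hv : Valid p u := by
      refine (isClosed_valid p).mem_of_tendsto lu ?_
      filter_upwards [eP] with n hn
      exact hn ▸ hV n
    refine ⟨p, u, h, hv, hmem, ?_⟩
    have hk : k = max h |u - p.1| • unitVec u := by
      rcases (le_trans hmem.1 (le_max_left h |u - p.1|)).eq_or_lt with h0 | hpos
      · rw [← h0, zero_smul]
        have := lm.abs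
        rw [← h0, abs_zero] at this
        refine tendsto_nhds_unique lk (tendsto_zero_iff_norm_tendsto_zero.2 ?_)
        simpa [norm_smul, norm_unitVec] using this
      · obtain ⟨M, hM⟩ := eventually_const lm hpos lk
        have eU : ∀ᶠ n in atTop, U n = U M := eventually_atTop.2 ⟨M, hM⟩
        have hu : u = U M := tendsto_nhds_unique lu (tendsto_const_nhds.congr' (eU.mono
          fun n hn => hn.symm))
        rw [← hu] at eU
        refine tendsto_nhds_unique lk ((lm.smul_const (unitVec u)).congr' ?_)
        filter_upwards [eU] with n hn
        rw [hn]
    rw [hg, hk, pt]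
  · -- At height `1` the label `p` is lost in the limit, but the hedgehog is determined.
    have lm : Tendsto (fun n => max (H n) |U n - (P n).1|) atTop (𝓝 1) :=
      tendsto_of_tendsto_of_tendsto_of_le_of_le lh tendsto_const_nhds
        (fun n => le_max_left _ _) (fun n => max_le (hH n).2 (hV n).abs_sub_le)
    obtain ⟨M, hM⟩ := eventually_const lm one_pos lk
    have eU : ∀ᶠ n in atTop, U n = U M := eventually_atTop.2 ⟨M, hM⟩
    have hu : u = U M := tendsto_nhds_unique lu (tendsto_const_nhds.congr' (eU.mono
      fun n hn => hn.symm))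
    rw [← hu] at eU
    have hv : Valid (P M) u := hu ▸ hV M
    have hk : k = (1 : ℝ) • unitVec u := by
      refine tendsto_nhds_unique lk ((lm.smul_const (unitVec u)).congr' ?_)
      filter_upwards [eU] with n hn
      rw [hn]
    have hg : g = 0 := by
      refine tendsto_nhds_unique lg (tendsto_zero_iff_norm_tendsto_zero.2 ?_)
      simpa [norm_smul, norm_unitVec] using l1.abs
    refine ⟨P M, u, 1, hv, hmem, ?_⟩
    rw [hg, hk, pt, max_eq_left hv.abs_sub_le]
    simp

lemma web_extremal (x : web) :
    IsLocalMin (fun y : web => y.1.2.1) x ∨ IsLocalMax (fun y : web => y.1.2.1) x := by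
  obtain ⟨_, p, u, h, hV, hh, rfl⟩ := x
  rcases (le_trans hh.1 (le_max_left h |u - p.1|)).eq_or_lt with h0 | hpos
  · have e1 : h = 0 := le_antisymm (h0 ▸ le_max_left _ _) hh.1
    have e2 : u = p.1 := by
      have : |u - p.1| ≤ 0 := h0 ▸ le_max_right _ _
      exact sub_eq_zero.1 (abs_nonpos_iff.1 this)
    subst e1
    have hc : Continuous fun y : web => ‖(1 : ℝ) • unitVec p - y.1.2.2.1‖ := by fun_prop
    have ev : ∀ᶠ y in 𝓝 (⟨pt p u 0, p, u, 0, hV, hh, rfl⟩ : web), Side p y.1.2.1 := by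
      filter_upwards [hc.continuousAt.eventually_lt (continuousAt_const (y := (1 : ℝ)))
        (by simp [pt])]
      rintro ⟨_, p', u', h', hV', hh', rfl⟩ hy
      have : p = p' := by
        by_contra hne
        have := abs_le_norm_sub hne 1 (1 - h')
        rw [abs_one] at this
        exact absurd hy (not_lt.2 this)
      exact this ▸ hV'.2.2
    by_cases hp : p.2
    · left
      filter_upwards [ev] with y hy
      simpa [Side, hp, pt, e2] using hy
    · right
      filter_upwards [ev] with y hy
      simpa [Side, hp, pt, e2] using hy
  · left
    have hc : Continuous fun y : web => ‖max h |u - p.1| • unitVec u - y.1.2.2.2‖ := by fun_prop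
    filter_upwards [hc.continuousAt.eventually_lt
      (continuousAt_const (y := max h |u - p.1|)) (by simpa [pt] using hpos)]
    rintro ⟨_, p', u', h', hV', hh', rfl⟩ hy
    have : u = u' := by
      by_contra hne
      have := abs_le_norm_sub hne (max h |u - p.1|) (max h' |u' - p'.1|)
      rw [abs_of_pos hpos] at this
      exact absurd hy (not_lt.2 this)
    exact this.le

lemma pt_mem {p : ℝ × Bool} {u h : ℝ} (hV : Valid p u) (hh : h ∈ Set.Icc (0 : ℝ) 1) :
    pt p u h ∈ web := ⟨p, u, h, hV, hh, rfl⟩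

/-- At height `1` all spikes of the hedgehog over `u` meet. -/
lemma pt_one {p q : ℝ × Bool} {u : ℝ} (hp : Valid p u) (hq : Valid q u) :
    pt p u 1 = pt q u 1 := by
  simp [pt, max_eq_left hp.abs_sub_le, max_eq_left hq.abs_sub_le]

/-- The feet of the spikes labelled `p` converge to the foot over `p.1`. -/
lemma tendsto_foot (p : ℝ × Bool) : Tendsto (fun u => pt p u 0) (𝓝 p.1) (𝓝 (pt p p.1 0)) := by
  have h : Tendsto (fun u : ℝ => |u - p.1|) (𝓝 p.1) (𝓝 0) := by
    have : Continuous fun u : ℝ => |u - p.1| := by fun_prop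
    simpa using this.tendsto p.1
  refine tendsto_const_nhds.prodMk_nhds (tendsto_id.prodMk_nhds
    (tendsto_const_nhds.prodMk_nhds ?_))
  rw [sub_self, abs_zero, max_self, zero_smul]
  refine tendsto_zero_iff_norm_tendsto_zero.2 ?_
  simpa [norm_smul, norm_unitVec] using h

lemma web_connected : ConnectedSpace web := by
  have z : (0 : ℝ) ∈ Set.Icc (0 : ℝ) 1 := by simp
  have o : (1 : ℝ) ∈ Set.Icc (0 : ℝ) 1 := by simp
  have : PreconnectedSpace web := by
    refine preconnectedSpace_of_forall_constant fun g hg => ?_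
    -- The value of `g` at the centre of the hedgehog over `t`.
    let G : Set.Icc (0 : ℝ) 1 → Bool := fun t => g ⟨_, pt_mem (valid_self t.2 true) o⟩
    have spike : ∀ p u h (hV : Valid p u) (hh : h ∈ Set.Icc (0 : ℝ) 1),
        g ⟨_, pt_mem hV hh⟩ = G ⟨u, hV.2.1⟩ := by
      intro p u h hV hh
      have hc : Continuous fun s : Set.Icc (0 : ℝ) 1 => g ⟨_, pt_mem hV s.2⟩ := by
        refine hg.comp (Continuous.subtype_mk ?_ _)
        unfold pt
        fun_prop
      have e : g ⟨_, pt_mem hV hh⟩ = g ⟨_, pt_mem hV o⟩ :=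
        PreconnectedSpace.constant inferInstance hc (x := ⟨h, hh⟩) (y := ⟨1, o⟩)
      rw [e]
      exact congrArg g (Subtype.ext (pt_one hV (valid_self hV.2.1 true)))
    have near : ∀ (e : Bool) (t : Set.Icc (0 : ℝ) 1),
        ∀ᶠ u in 𝓝 t, Side (t.1, e) u.1 → G u = G t := by
      intro e t
      have hU : IsOpen (g ⁻¹' {G t}) := (isOpen_discrete _).preimage hg
      obtain ⟨W, hW, hWU⟩ := isOpen_induced_iff.1 hU
      have ht : pt (t.1, e) t.1 0 ∈ W := by
        have : (⟨_, pt_mem (valid_self t.2 e) z⟩ : web) ∈ Subtype.val ⁻¹' W := by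
          rw [hWU]; exact spike _ _ _ (valid_self t.2 e) z
        exact this
      have h1 := ((tendsto_foot (t.1, e)).comp (continuous_subtype_val.tendsto t)).eventually
        (hW.mem_nhds ht)
      filter_upwards [h1] with u hu hs
      have hV : Valid (t.1, e) u.1 := ⟨t.2, u.2, hs⟩
      have : (⟨_, pt_mem hV z⟩ : web) ∈ g ⁻¹' {G t} := by
        rw [← hWU]; exact hu
      exact (spike _ _ _ hV z).symm.trans this
    have hG : IsLocallyConstant G := by
      refine (IsLocallyConstant.iff_eventually_eq G).2 fun t => ?_
      filter_upwards [near true t, near false t] with u h1 h2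
      rcases le_total t.1 u.1 with h | h
      · exact h1 (by simpa [Side] using h)
      · exact h2 (by simpa [Side] using h)
    rintro ⟨_, p, u, h, hV, hh, rfl⟩ ⟨_, p', u', h', hV', hh', rfl⟩
    rw [spike p u h hV hh, spike p' u' h' hV' hh']
    exact PreconnectedSpace.constant inferInstance hG.continuous
  exact { toNonempty := ⟨⟨_, pt_mem (valid_self z true) z⟩⟩ }

end LocExtremal

open LocExtremal in
/-- There exist a connected complete metric space `X` and a continuous locally
extremal function `f : X → ℝ` whose image is exactly the unit interval `[0,1]`. -/
theorem stmt_12 : ∃ (X : Type) (_ : MetricSpace X) (f : X → ℝ),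
    CompleteSpace X ∧ ConnectedSpace X ∧ Continuous f ∧
    (∀ x : X, IsLocalMin f x ∨ IsLocalMax f x) ∧
    Set.range f = Set.Icc (0:ℝ) 1 := by
  refine ⟨web, inferInstance, fun y => y.1.2.1, web_isClosed.completeSpace_coe, web_connected,
    by fun_prop, web_extremal, ?_⟩
  ext u
  constructor
  · rintro ⟨⟨_, p, u, h, hV, hh, rfl⟩, rfl⟩
    exact hV.2.1
  · intro hu
    exact ⟨⟨_, pt_mem (valid_self hu true) (h := 0) (by simp)⟩, rfl⟩
end

section
/- There exists a complete metric space which is connected but not separably connected (Theorem 3 of the paper). -/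
/-!
Take a real line of "hubs" with the discrete metric, and for every pair `(t, u)` of reals a segment
`h ∈ [0, 1]` (a spine) which starts at the hub `u` and whose tip, at `h = 1`, has the position `u`
on a "page" labelled `t`. On the page `t` the tip of `(t, u)` lies at distance `|u - t|` from the
tip of `(t, t)`, and tips of spines with distinct `u` stay away from each other except for this
accumulation at `(t, t)`. The map `spinePoint` realises this in a product of three `ℓ^∞` spaces, and
`cobweb` is its image, a closed set and hence a complete metric space.

*Connectedness.* A continuous map to `Bool` is constant on every spine, so it is given by a function
`g` of the hub `u`. The tips of `(t, u)` converge to the tip of `(t, t)` as `u → t`, so `g` is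
continuous on `ℝ`, hence constant.

*No separable connection.* The hub coordinate `u` is continuous, so a connected set containing two
different hubs takes uncountably many values of `u`. But by `spinePoint_local`, each point with
hub `u` has a neighbourhood in which all points have hub `u` or page label `u`. So the hub
coordinates of a separable set are among the countably many coordinates `t`, `u` of the points of a
countable dense subset.
-/

/-- A topological space `X` is separably connected if any two points of `X`
lie in a connected subspace having a countable dense subset (in the subspace
topology; equivalently, a countable subset `t ⊆ S` with `S ⊆ closure t`). -/
def SeparablyConnected (X : Type*) [TopologicalSpace X] : Prop :=
  ∀ x y : X, ∃ S : Set X, x ∈ S ∧ y ∈ S ∧ IsConnected S ∧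
    ∃ t ⊆ S, t.Countable ∧ S ⊆ closure t

open Filter Topology Set
open scoped ENNReal

namespace Cobweb

section Spike

variable {ι : Type} [DecidableEq ι]

/-- The vector `r • e_i` of `ℓ^∞(ι)`. For `r ≥ 0` these form the hedgehog whose spines are indexed
by `ι`. -/
noncomputable def spike (i : ι) (r : ℝ) : lp (fun _ : ι => ℝ) ∞ := lp.single ∞ i r

lemma norm_spike (i : ι) (r : ℝ) : ‖spike i r‖ = |r| := by
  simp [spike, lp.norm_single]

lemma dist_spike_same (i : ι) (r s : ℝ) : dist (spike i r) (spike i s) = |r - s| := by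
  rw [dist_eq_norm, spike, spike, ← lp.single_sub]
  exact norm_spike i (r - s)

lemma continuous_spike (i : ι) : Continuous (spike i) :=
  (Isometry.of_dist_eq fun r s => dist_spike_same i r s).continuous

lemma le_dist_spike {i j : ι} (hij : i ≠ j) (r s : ℝ) : |r| ≤ dist (spike i r) (spike j s) := by
  rw [dist_eq_norm]
  have h := lp.norm_apply_le_norm ENNReal.top_ne_zero (spike i r - spike j s) i
  simpa [spike, hij] using h

lemma abs_sub_le_dist_spike (i j : ι) {r s : ℝ} (hr : 0 ≤ r) (hs : 0 ≤ s) :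
    |r - s| ≤ dist (spike i r) (spike j s) := by
  rw [dist_eq_norm]
  simpa [norm_spike, abs_of_nonneg hr, abs_of_nonneg hs] using
    abs_norm_sub_norm_le (spike i r) (spike j s)

/-- A sequence in the hedgehog which converges to a point other than the centre eventually stays on
one spine. -/
lemma eventually_const_of_tendsto {i : ℕ → ι} {r : ℕ → ℝ} {v : lp (fun _ : ι => ℝ) ∞}
    (h : Tendsto (fun n => spike (i n) (r n)) atTop (𝓝 v)) (hv : v ≠ 0) :
    ∃ j, ∀ᶠ n in atTop, i n = j := by
  have hpos : 0 < ‖v‖ := norm_pos_iff.2 hv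
  obtain ⟨N, hN⟩ := (Metric.tendsto_atTop.1 h) (‖v‖ / 3) (by positivity)
  refine ⟨i N, eventually_atTop.2 ⟨N, fun n hn => ?_⟩⟩
  by_contra hne
  have h1 := le_dist_spike hne (r n) (r N)
  have h2 := dist_triangle_right (spike (i n) (r n)) (spike (i N) (r N)) v
  have h3 := hN n hn
  have h4 := hN N le_rfl
  have h5 : ‖v‖ - ‖spike (i n) (r n)‖ ≤ dist (spike (i n) (r n)) v := by
    rw [dist_comm, dist_eq_norm]
    exact norm_sub_norm_le _ _
  rw [norm_spike] at h5
  linarith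

end Spike

/-- The ambient complete space of the cobweb. -/
abbrev Ambient : Type :=
  lp (fun _ : ℝ => ℝ) ∞ × lp (fun _ : ℝ => ℝ) ∞ × lp (fun _ : ℝ × ℝ => ℝ) ∞

/-- The point at height `h` on the spine which goes from the hub `u` (at height `0`, where the
value does not depend on `t`) to the tip with position `u` on the page `t` (at height `1`). The
third component separates tips on the same page. -/
noncomputable def spinePoint (t u h : ℝ) : Ambient :=
  (spike u (1 - h), spike t h, spike (t, u) (h * |u - t|))

/-- The union of all spines. -/
def cobweb : Set Ambient := {x | ∃ t u h : ℝ, h ∈ Icc (0 : ℝ) 1 ∧ spinePoint t u h = x}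

lemma continuous_spinePoint (t u : ℝ) : Continuous (spinePoint t u) :=
  ((continuous_spike u).comp (by fun_prop)).prodMk
    ((continuous_spike t).prodMk ((continuous_spike (t, u)).comp (by fun_prop)))

lemma spinePoint_zero (t t' u : ℝ) : spinePoint t u 0 = spinePoint t' u 0 := by
  simp [spinePoint, spike]

/-- The tips on the page `t` accumulate at the tip of the spine `(t, t)`. -/
lemma tendsto_tip (t : ℝ) :
    Tendsto (fun u => spinePoint t u 1) (𝓝 t) (𝓝 (spinePoint t t 1)) := by
  rw [tendsto_iff_dist_tendsto_zero]
  have h0 : Tendsto (fun u : ℝ => |u - t|) (𝓝 t) (𝓝 0) := by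
    have : Continuous fun u : ℝ => |u - t| := by fun_prop
    simpa using this.tendsto t
  refine h0.congr fun u => ?_
  simp [spinePoint, spike, Prod.dist_eq, lp.norm_single]

lemma isClosed_cobweb : IsClosed cobweb := by
  refine IsSeqClosed.isClosed fun x y hx hxy => ?_
  choose t u h hh hx using hx
  obtain ⟨a, b, c⟩ := y
  obtain rfl : (fun n => spinePoint (t n) (u n) (h n)) = x := funext hx
  have ha : Tendsto (fun n => spike (u n) (1 - h n)) atTop (𝓝 a) :=
    (continuous_fst.tendsto _).comp hxy
  have hb : Tendsto (fun n => spike (t n) (h n)) atTop (𝓝 b) :=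
    ((continuous_fst.comp continuous_snd).tendsto _).comp hxy
  have hc : Tendsto (fun n => spike (t n, u n) (h n * |u n - t n|)) atTop (𝓝 c) :=
    ((continuous_snd.comp continuous_snd).tendsto _).comp hxy
  have hH : Tendsto h atTop (𝓝 ‖b‖) :=
    hb.norm.congr fun n => by rw [norm_spike, abs_of_nonneg (hh n).1]
  have hmem : ‖b‖ ∈ Icc (0 : ℝ) 1 := isClosed_Icc.mem_of_tendsto hH (Eventually.of_forall hh)
  have hna : ‖a‖ = 1 - ‖b‖ := by
    refine tendsto_nhds_unique ha.norm ((hH.const_sub 1).congr fun n => ?_)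
    rw [norm_spike, abs_of_nonneg (by linarith [(hh n).2])]
  have key : (∃ t', ∀ᶠ n in atTop, t n = t') → (∃ u', ∀ᶠ n in atTop, u n = u') →
      (a, b, c) ∈ cobweb := by
    rintro ⟨t', ht⟩ ⟨u', hu⟩
    refine ⟨t', u', ‖b‖, hmem, tendsto_nhds_unique ?_ hxy⟩
    refine (((continuous_spinePoint t' u').tendsto _).comp hH).congr' ?_
    filter_upwards [ht, hu] with n h1 h2
    simp [h1, h2]
  by_cases hc0 : c = 0
  · subst hc0
    by_cases hb0 : b = 0
    · subst hb0
      have ha0 : a ≠ 0 := by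
        rintro rfl
        simp at hna
      obtain ⟨u', hu⟩ := eventually_const_of_tendsto ha ha0
      have : a = spike u' 1 := by
        refine tendsto_nhds_unique ha ?_
        have h1 := ((continuous_spike u').tendsto _).comp (hH.const_sub 1)
        simp only [norm_zero, sub_zero] at h1
        refine h1.congr' ?_
        filter_upwards [hu] with n h1
        simp [h1]
      exact ⟨u', u', 0, by simp, by simp [spinePoint, this, spike]⟩
    · have ht := eventually_const_of_tendsto hb hb0
      by_cases ha0 : a = 0
      · subst ha0
        -- The limit has height `1` and is the accumulation point of a page.
        obtain ⟨t', ht⟩ := ht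
        have hb1 : ‖b‖ = 1 := by
          simp at hna
          linarith
        have : b = spike t' 1 := by
          refine tendsto_nhds_unique hb ?_
          have h1 := ((continuous_spike t').tendsto _).comp hH
          rw [hb1] at h1
          refine h1.congr' ?_
          filter_upwards [ht] with n h1
          simp [h1]
        exact ⟨t', t', 1, by simp, by simp [spinePoint, this, spike]⟩
      · exact key ht (eventually_const_of_tendsto ha ha0)
  · obtain ⟨⟨t', u'⟩, htu⟩ := eventually_const_of_tendsto hc hc0
    exact key ⟨t', htu.mono fun n hn => (Prod.ext_iff.1 hn).1⟩
      ⟨u', htu.mono fun n hn => (Prod.ext_iff.1 hn).2⟩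

/-- Close to a point with hub `u`, every point either has hub `u`, or lies on the page `u` and has
a hub close to `u`. This gives both the continuity of the hub coordinate and its countability on
separable sets. -/
lemma spinePoint_local (t u h : ℝ) (hh : h ∈ Icc (0 : ℝ) 1) {ε : ℝ} (hε : 0 < ε) :
    ∃ δ > 0, ∀ t' u' h' : ℝ, h' ∈ Icc (0 : ℝ) 1 →
      dist (spinePoint t u h) (spinePoint t' u' h') < δ → u' = u ∨ (t' = u ∧ |u' - u| < ε) := by
  obtain ⟨h0, h1⟩ := hh
  have hd (t' u' h' : ℝ) (δ : ℝ) (hlt : dist (spinePoint t u h) (spinePoint t' u' h') < δ) :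
      dist (spike u (1 - h)) (spike u' (1 - h')) < δ ∧ dist (spike t h) (spike t' h') < δ ∧
      dist (spike (t, u) (h * |u - t|)) (spike (t', u') (h' * |u' - t'|)) < δ := by
    simpa [spinePoint, Prod.dist_eq] using hlt
  rcases h1.lt_or_eq with h1 | rfl
  · refine ⟨1 - h, by linarith, fun t' u' h' _ hlt => Or.inl ?_⟩
    by_contra hne
    have := le_dist_spike (Ne.symm hne) (1 - h) (1 - h')
    linarith [(hd _ _ _ _ hlt).1, le_abs_self (1 - h)]
  by_cases hut : u = t
  · subst hut
    refine ⟨min (1 / 2) (ε / 2), by positivity, fun t' u' h' hh' hlt => ?_⟩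
    obtain ⟨-, hb, hc⟩ := hd _ _ _ _ hlt
    have ht : t' = u := by
      by_contra hne
      have := le_dist_spike (Ne.symm hne) 1 h'
      rw [abs_one] at this
      linarith [min_le_left (1 / 2) (ε / 2)]
    subst ht
    refine Or.inr ⟨rfl, ?_⟩
    rw [dist_spike_same] at hb
    have hc' := abs_sub_le_dist_spike (t', t') (t', u') (r := 1 * |t' - t'|)
      (s := h' * |u' - t'|) (by positivity) (mul_nonneg hh'.1 (abs_nonneg _))
    simp only [sub_self, abs_zero, mul_zero, zero_sub, abs_neg] at hc'
    have h2 := le_abs_self (1 - h')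
    have h3 := le_abs_self (h' * |u' - t'|)
    simp only [sub_self, abs_zero, mul_zero] at hc
    have h4 : 1 / 2 < h' := by linarith [min_le_left (1 / 2) (ε / 2)]
    have h5 : h' * |u' - t'| < ε / 2 := by linarith [min_le_right (1 / 2) (ε / 2)]
    nlinarith [abs_nonneg (u' - t')]
  · have hpos : 0 < |u - t| := abs_pos.2 (sub_ne_zero.2 hut)
    refine ⟨|u - t|, hpos, fun t' u' h' _ hlt => Or.inl ?_⟩
    by_contra hne
    have := le_dist_spike (i := (t, u)) (j := (t', u'))
      (fun he => hne (Prod.ext_iff.1 he).2.symm) (1 * |u - t|) (h' * |u' - t'|)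
    rw [one_mul, abs_abs] at this
    have h3 := (hd _ _ _ _ hlt).2.2
    rw [one_mul] at h3
    linarith

/-- The point of the cobweb at height `h` on the spine `(t, u)`. -/
noncomputable def pt (t u : ℝ) (h : Icc (0 : ℝ) 1) : cobweb :=
  ⟨spinePoint t u h, t, u, h, h.2, rfl⟩

lemma exists_pt (x : cobweb) : ∃ t u h, pt t u h = x := by
  obtain ⟨x, t, u, h, hh, rfl⟩ := x
  exact ⟨t, u, ⟨h, hh⟩, rfl⟩

lemma connectedSpace_cobweb : ConnectedSpace cobweb := by
  have : PreconnectedSpace cobweb := by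
    refine preconnectedSpace_of_forall_constant fun F hF => ?_
    have hspine (t u : ℝ) (h : Icc (0 : ℝ) 1) : F (pt t u h) = F (pt 0 u 0) := by
      have hc : Continuous (pt t u) :=
        ((continuous_spinePoint t u).comp continuous_subtype_val).subtype_mk _
      have h0 : pt t u 0 = pt 0 u 0 := Subtype.ext (spinePoint_zero t 0 u)
      rw [← h0]
      exact PreconnectedSpace.constant inferInstance (hF.comp hc)
    have hg : Continuous fun u : ℝ => F (pt 0 u 0) := by
      rw [continuous_iff_continuousAt]
      intro t
      have h1 : Tendsto (fun u => pt t u 1) (𝓝 t) (𝓝 (pt t t 1)) :=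
        tendsto_subtype_rng.2 (tendsto_tip t)
      have h2 := (hF.tendsto _).comp h1
      simpa only [ContinuousAt, Function.comp_def, hspine] using h2
    intro x y
    obtain ⟨t, u, h, rfl⟩ := exists_pt x
    obtain ⟨t', u', h', rfl⟩ := exists_pt y
    rw [hspine, hspine t']
    exact PreconnectedSpace.constant inferInstance hg
  exact { toNonempty := ⟨pt 0 0 0⟩ }

lemma not_separablyConnected_cobweb : ¬ SeparablyConnected cobweb := by
  intro hsep
  choose T U H hTUH using exists_pt
  have hloc (x : cobweb) {ε : ℝ} (hε : 0 < ε) :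
      ∃ δ > 0, ∀ t u h, dist x (pt t u h) < δ → u = U x ∨ (t = U x ∧ |u - U x| < ε) := by
    obtain ⟨δ, hδ, hl⟩ := spinePoint_local (T x) (U x) (H x) (H x).2 hε
    refine ⟨δ, hδ, fun t u h hlt => hl t u h h.2 ?_⟩
    rw [← hTUH x] at hlt
    exact hlt
  have hloc' (x : cobweb) {ε : ℝ} (hε : 0 < ε) :
      ∃ δ > 0, ∀ y, dist x y < δ → U y = U x ∨ (T y = U x ∧ |U y - U x| < ε) := by
    obtain ⟨δ, hδ, hl⟩ := hloc x hε
    exact ⟨δ, hδ, fun y hy => hl (T y) (U y) (H y) (by rwa [hTUH])⟩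
  -- The chosen hub coordinate does not depend on the choice of a representation.
  have hU (t u : ℝ) (h : Icc (0 : ℝ) 1) : U (pt t u h) = u := by
    by_contra hne
    obtain ⟨δ, hδ, hl⟩ := hloc (pt t u h) (abs_pos.2 (sub_ne_zero.2 (Ne.symm hne)))
    rcases hl t u h (by simpa using hδ) with h1 | h1
    · exact hne h1.symm
    · exact lt_irrefl _ h1.2
  have hcont : Continuous U := by
    rw [Metric.continuous_iff]
    intro x ε hε
    obtain ⟨δ, hδ, hl⟩ := hloc' x hε
    refine ⟨δ, hδ, fun y hy => ?_⟩
    rw [dist_comm] at hy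
    rcases hl y hy with h1 | h1
    · simpa [h1] using hε
    · exact h1.2
  obtain ⟨S, hx, hy, hS, D, -, hDc, hSD⟩ := hsep (pt 0 0 0) (pt 0 1 0)
  have hsub : Icc (0 : ℝ) 1 ⊆ U '' S :=
    (hS.isPreconnected.image U hcont.continuousOn).Icc_subset
      ⟨_, hx, hU 0 0 0⟩ ⟨_, hy, hU 0 1 0⟩
  have hcount : U '' S ⊆ U '' D ∪ T '' D := by
    rintro _ ⟨x, hxS, rfl⟩
    obtain ⟨δ, hδ, hl⟩ := hloc' x one_pos
    obtain ⟨d, hd, hlt⟩ := Metric.mem_closure_iff.1 (hSD hxS) δ hδ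
    rcases hl d hlt with h1 | h1
    · exact Or.inl ⟨d, hd, h1⟩
    · exact Or.inr ⟨d, hd, h1.1⟩
  have hI : (Icc (0 : ℝ) 1).Countable :=
    ((hDc.image U).union (hDc.image T)).mono (hsub.trans hcount)
  rw [← Cardinal.le_aleph0_iff_set_countable, Cardinal.mk_Icc_real zero_lt_one] at hI
  exact absurd hI Cardinal.aleph0_lt_continuum.not_ge

end Cobweb

/-- Theorem 3: there is a complete metric space which is connected but not
separably connected. -/
theorem stmt_13 : ∃ (X : Type) (_ : MetricSpace X),
    CompleteSpace X ∧ ConnectedSpace X ∧ ¬ SeparablyConnected X :=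
  ⟨Cobweb.cobweb, inferInstance, Cobweb.isClosed_cobweb.completeSpace_coe,
    Cobweb.connectedSpace_cobweb, Cobweb.not_separablyConnected_cobweb⟩
end
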